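/- Let X and Y be two-dimensional normed spaces and τ : S_X → S_Y a surjective isometry. If the set of points of S_X where the norm of X fails to be differentiable is finite and has more than three elements, then τ is linear. -/

import Mathlib

/-!
Let `z` be a point of the unit sphere of `X` at which the norm is not differentiable. In dimension
two the norm then has a two-sided derivative at `z` only along `ℝ z`: we say that `z` is a *vertex*.
Cut the unit ball of `X` into chords directed by `z`. For almost every chord, differentiating the
distance from its lower endpoint to a moving upper endpoint, in `X` and in `Y`, shows that the image
of the chord under `τ` points to a vertex of `Y` as well. But a curve of vertices whose norm is
differentiable moves radially, so the direction of the image chord has derivative zero almost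
everywhere; being locally Lipschitz, it is a constant vertex `z'`. Hence `τ` carries chords directed
by `z` to chords of the same length directed by `z'`.

Next, slide the image of the upper arc along `z'` by the height of the arc. The one-sided
derivatives of the norm at `z'` along the velocity of the resulting curve do not depend on the
point. At a vertex they determine the velocity up to the side of `ℝ z'` on which it lies, and this
side does not change because `τ` is injective. So the curve is a line run at constant speed, which
means that `τ` is affine on the part of the sphere met by the interior of the chords. Segments
directed by a vertex are unique geodesics, which extends the affine formula to the whole sphere. An
affine isometry between the unit spheres has no translation part.
-/

open Set Filter Topology Metric MeasureTheory
open scoped NNReal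

section NormDirDeriv

variable {E : Type*} [NormedAddCommGroup E] [NormedSpace ℝ E] {p v : E}

/-- The one-sided directional derivative of the norm at `p` in the direction `v`. -/
noncomputable def normDirDeriv (p v : E) : ℝ :=
  derivWithin (fun t : ℝ => ‖p + t • v‖) (Ici 0) 0

theorem hasDerivWithinAt_norm_add_smul (p v : E) :
    HasDerivWithinAt (fun t : ℝ => ‖p + t • v‖) (normDirDeriv p v) (Ici 0) 0 := by
  have hconv : ConvexOn ℝ univ fun t : ℝ => ‖p + t • v‖ := by
    simpa [Function.comp_def, AffineMap.lineMap_apply, add_comm] using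
      (convexOn_univ_norm (E := E)).comp_affineMap (AffineMap.lineMap p (p + v))
  rw [normDirDeriv, ← derivWithin_Ioi_eq_Ici]
  exact (hconv.hasDerivWithinAt_rightDeriv_of_mem_interior (by simp)).Ici_of_Ioi

theorem hasDerivWithinAt_norm_comp {q : ℝ → E} {a : ℝ} (hq : HasDerivWithinAt q v (Ici a) a) :
    HasDerivWithinAt (fun t => ‖q t‖) (normDirDeriv (q a) v) (Ici a) a := by
  have htangent : HasDerivWithinAt (fun t => ‖q a + (t - a) • v‖) (normDirDeriv (q a) v)
      (Ici a) a := by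
    have h := hasDerivWithinAt_norm_add_smul (q a) v
    rw [← sub_self a] at h
    simpa [Function.comp_def] using h.comp (h := fun t => t - a) a
      ((hasDerivAt_id a).sub_const a).hasDerivWithinAt fun t ht => by simpa using ht
  have hdiff : HasDerivWithinAt (fun t => ‖q t‖ - ‖q a + (t - a) • v‖) 0 (Ici a) a := by
    rw [hasDerivWithinAt_iff_isLittleO] at hq ⊢
    refine (Asymptotics.IsBigO.of_bound' (Eventually.of_forall fun t => ?_)).trans_isLittleO hq
    simpa [sub_sub] using abs_norm_sub_norm_le (q t) (q a + (t - a) • v)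
  simpa [Pi.add_def] using hdiff.add htangent

theorem normDirDeriv_eq_of_hasDerivWithinAt {q : ℝ → E} {a d : ℝ}
    (hq : HasDerivWithinAt q v (Ici a) a) (hd : HasDerivWithinAt (fun t => ‖q t‖) d (Ici a) a) :
    normDirDeriv (q a) v = d :=
  (uniqueDiffWithinAt_Ici a).eq_deriv _ (hasDerivWithinAt_norm_comp hq) hd

theorem hasDerivAt_add_smul (p v : E) (a : ℝ) : HasDerivAt (fun t : ℝ => p + t • v) v a := by
  simpa using ((hasDerivAt_id a).smul_const v).const_add p

@[simp]
theorem normDirDeriv_zero_right (p : E) : normDirDeriv p 0 = 0 := by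
  simp [normDirDeriv]

theorem normDirDeriv_smul_smul (c : ℝ) (p v : E) :
    normDirDeriv (c • p) (c • v) = |c| * normDirDeriv p v := by
  have hcurve := ((hasDerivAt_add_smul p v 0).const_smul c).hasDerivWithinAt (s := Ici 0)
  have hnorm := (hasDerivWithinAt_norm_add_smul p v).const_mul |c|
  simp only [← Real.norm_eq_abs, ← norm_smul] at hnorm
  simpa using normDirDeriv_eq_of_hasDerivWithinAt hcurve hnorm

theorem normDirDeriv_smul_right {c : ℝ} (hc : 0 ≤ c) (p v : E) :
    normDirDeriv p (c • v) = c * normDirDeriv p v := by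
  have h := hasDerivWithinAt_norm_add_smul p v
  rw [← mul_zero c] at h
  have hcomp := h.comp 0 (((hasDerivAt_id (0 : ℝ)).const_mul c).hasDerivWithinAt (s := Ici 0))
    fun t ht => mul_le_mul_of_nonneg_left ht hc
  refine (uniqueDiffWithinAt_Ici 0).eq_deriv _ (hasDerivWithinAt_norm_add_smul p (c • v)) ?_
  simpa [Function.comp_def, smul_smul, mul_comm] using hcomp

theorem normDirDeriv_smul_left {c : ℝ} (hc : 0 < c) (p v : E) :
    normDirDeriv (c • p) v = normDirDeriv p v := by
  rw [← smul_inv_smul₀ hc.ne' v, normDirDeriv_smul_smul, abs_of_pos hc,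
    normDirDeriv_smul_right hc.le]

theorem normDirDeriv_add_smul_self (p v : E) (c : ℝ) :
    normDirDeriv p (v + c • p) = normDirDeriv p v + c * ‖p‖ := by
  have hscale : HasDerivAt (fun t : ℝ => 1 + t * c) c 0 := by
    simpa using ((hasDerivAt_id (0 : ℝ)).mul_const c).const_add 1
  have hcurve := (hscale.smul (hasDerivAt_add_smul p v 0)).hasDerivWithinAt (s := Ici 0)
  have hnorm := hscale.hasDerivWithinAt.mul (hasDerivWithinAt_norm_add_smul p v)
  have hpos : ∀ᶠ t : ℝ in 𝓝 0, 0 < 1 + t * c :=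
    hscale.continuousAt.eventually_const_lt (by simp)
  have heq : (fun t : ℝ => ‖(1 + t * c) • (p + t • v)‖) =ᶠ[𝓝[≥] 0]
      fun t => (1 + t * c) * ‖p + t • v‖ := by
    filter_upwards [nhdsWithin_le_nhds hpos] with t ht
    rw [norm_smul, Real.norm_of_nonneg ht.le]
  simpa [add_comm] using normDirDeriv_eq_of_hasDerivWithinAt hcurve
    (hnorm.congr_of_eventuallyEq heq (by simp))

theorem normDirDeriv_le_of_hasDerivWithinAt {g : ℝ → ℝ} {d : ℝ}
    (hg : HasDerivWithinAt g d (Ici 0) 0) (h0 : g 0 = ‖p‖) (hle : ∀ t > 0, ‖p + t • v‖ ≤ g t) :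
    normDirDeriv p v ≤ d := by
  have hp := hasDerivWithinAt_norm_add_smul p v
  rw [← hasDerivWithinAt_Ioi_iff_Ici, hasDerivWithinAt_iff_tendsto_slope' self_notMem_Ioi] at hp hg
  refine le_of_tendsto_of_tendsto hp hg ?_
  filter_upwards [self_mem_nhdsWithin] with t (ht : 0 < t)
  rw [slope_def_field, slope_def_field, zero_smul, add_zero, h0, sub_zero]
  gcongr
  exact hle t ht

theorem normDirDeriv_le_norm (p v : E) : normDirDeriv p v ≤ ‖v‖ := by
  refine normDirDeriv_le_of_hasDerivWithinAt (hasDerivAt_add_smul ‖p‖ ‖v‖ 0).hasDerivWithinAt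
    (by simp) fun t ht => (norm_add_le _ _).trans_eq ?_
  rw [norm_smul, Real.norm_of_nonneg ht.le, smul_eq_mul]

theorem normDirDeriv_add_le (p v w : E) :
    normDirDeriv p (v + w) ≤ normDirDeriv p v + normDirDeriv p w := by
  have hmean := ((hasDerivWithinAt_norm_add_smul p ((2 : ℝ) • v)).add
    (hasDerivWithinAt_norm_add_smul p ((2 : ℝ) • w))).const_mul 2⁻¹
  refine (normDirDeriv_le_of_hasDerivWithinAt hmean (by simp; ring) fun t _ => ?_).trans_eq ?_
  · have hmid : p + t • (v + w) =
        (2⁻¹ : ℝ) • ((p + t • (2 : ℝ) • v) + (p + t • (2 : ℝ) • w)) := by module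
    rw [hmid, norm_smul, Real.norm_of_nonneg (by norm_num)]
    exact mul_le_mul_of_nonneg_left (norm_add_le _ _) (by norm_num)
  · rw [normDirDeriv_smul_right zero_le_two, normDirDeriv_smul_right zero_le_two]
    ring

/-- The jump at `p` of the derivative of the norm along the line through `p` directed by `v`; it
vanishes exactly when the norm has a two-sided derivative at `p` in the direction `v`. -/
noncomputable def normDirJump (p v : E) : ℝ :=
  normDirDeriv p v + normDirDeriv p (-v)

theorem normDirJump_nonneg (p v : E) : 0 ≤ normDirJump p v := by
  simpa [normDirJump] using normDirDeriv_add_le p v (-v)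

theorem normDirJump_neg_right (p v : E) : normDirJump p (-v) = normDirJump p v := by
  rw [normDirJump, normDirJump, neg_neg, add_comm]

theorem normDirJump_smul_right (c : ℝ) (p v : E) :
    normDirJump p (c • v) = |c| * normDirJump p v := by
  wlog hc : 0 ≤ c generalizing c
  · rw [← normDirJump_neg_right, ← neg_smul, this (-c) (by linarith), abs_neg]
  rw [normDirJump, ← smul_neg, normDirDeriv_smul_right hc, normDirDeriv_smul_right hc,
    abs_of_nonneg hc, normDirJump, mul_add]

theorem normDirJump_smul_left {c : ℝ} (hc : 0 < c) (p v : E) :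
    normDirJump (c • p) v = normDirJump p v := by
  rw [normDirJump, normDirDeriv_smul_left hc, normDirDeriv_smul_left hc, normDirJump]

theorem normDirJump_add_smul_self (p v : E) (c : ℝ) :
    normDirJump p (v + c • p) = normDirJump p v := by
  rw [normDirJump, neg_add, ← neg_smul, normDirDeriv_add_smul_self, normDirDeriv_add_smul_self,
    normDirJump]
  ring

section Curves

variable {F : Type*} [NormedAddCommGroup F] [NormedSpace ℝ F] {q : ℝ → E} {r : ℝ → F} {w : F}
  {a d : ℝ}

theorem normDirDeriv_eq_of_norm_eventuallyEq (hq : HasDerivAt q v a) (hr : HasDerivAt r w a)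
    (h : ∀ᶠ t in 𝓝 a, ‖q t‖ = ‖r t‖) : normDirDeriv (q a) v = normDirDeriv (r a) w :=
  normDirDeriv_eq_of_hasDerivWithinAt hq.hasDerivWithinAt <|
    (hasDerivWithinAt_norm_comp hr.hasDerivWithinAt).congr_of_eventuallyEq
      (nhdsWithin_le_nhds h) h.self_of_nhds

theorem normDirDeriv_neg_eq_of_norm_eventuallyEq (hq : HasDerivAt q v a) (hr : HasDerivAt r w a)
    (h : ∀ᶠ t in 𝓝 a, ‖q t‖ = ‖r t‖) : normDirDeriv (q a) (-v) = normDirDeriv (r a) (-w) := by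
  rw [← neg_neg a] at hq hr h
  have hq' := hq.scomp (-a) (hasDerivAt_neg (-a))
  have hr' := hr.scomp (-a) (hasDerivAt_neg (-a))
  simpa using
    normDirDeriv_eq_of_norm_eventuallyEq hq' hr' (continuous_neg.continuousAt.eventually h)

theorem normDirJump_eq_of_norm_eventuallyEq (hq : HasDerivAt q v a) (hr : HasDerivAt r w a)
    (h : ∀ᶠ t in 𝓝 a, ‖q t‖ = ‖r t‖) : normDirJump (q a) v = normDirJump (r a) w :=
  congrArg₂ (· + ·) (normDirDeriv_eq_of_norm_eventuallyEq hq hr h)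
    (normDirDeriv_neg_eq_of_norm_eventuallyEq hq hr h)

theorem normDirJump_eq_zero_of_hasDerivAt_norm (hq : HasDerivAt q v a)
    (hd : HasDerivAt (fun t => ‖q t‖) d a) : normDirJump (q a) v = 0 := by
  have hforward := normDirDeriv_eq_of_hasDerivWithinAt hq.hasDerivWithinAt hd.hasDerivWithinAt
  rw [← neg_neg a] at hq hd
  have hbackward := normDirDeriv_eq_of_hasDerivWithinAt
    (hq.scomp (-a) (hasDerivAt_neg (-a))).hasDerivWithinAt
    (hd.scomp (-a) (hasDerivAt_neg (-a))).hasDerivWithinAt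
  simp only [Function.comp_apply, neg_neg, neg_smul, one_smul] at hbackward
  rw [normDirJump, hforward, hbackward, add_neg_cancel]

end Curves

theorem differentiableAt_norm_of_normDirJump_eq_zero [FiniteDimensional ℝ E]
    (h : ∀ v, normDirJump p v = 0) : DifferentiableAt ℝ (fun x : E => ‖x‖) p := by
  have hneg : ∀ v, normDirDeriv p (-v) = -normDirDeriv p v := fun v => by
    linarith [h v, normDirJump.eq_1 p v]
  let L : E →ₗ[ℝ] ℝ :=
    { toFun := normDirDeriv p
      map_add' := fun v w => by
        refine le_antisymm (normDirDeriv_add_le p v w) ?_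
        have h' := normDirDeriv_add_le p (v + w) (-w)
        rw [add_neg_cancel_right, hneg] at h'
        linarith
      map_smul' := fun c v => by
        rcases le_total 0 c with hc | hc
        · exact normDirDeriv_smul_right hc p v
        · have h' := normDirDeriv_smul_right (neg_nonneg.2 hc) p v
          rw [neg_smul, hneg] at h'
          simpa using h' }
  have hline : ∀ v, HasLineDerivAt ℝ (fun x : E => ‖x‖) (L v) p v := by
    intro v
    have hright := hasDerivWithinAt_norm_add_smul p v
    have hleft : HasDerivWithinAt (fun t : ℝ => ‖p + t • v‖) (L v) (Iic 0) 0 := by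
      have h' := hasDerivWithinAt_norm_add_smul p (-v)
      rw [hneg, ← neg_zero] at h'
      simpa [Function.comp_def, L] using
        h'.comp 0 (hasDerivAt_neg (0 : ℝ)).hasDerivWithinAt fun t ht => by simpa using ht
    simpa [HasLineDerivAt] using hleft.union hright
  borelize E
  exact (LipschitzWith.hasFDerivAt_of_hasLineDerivAt_of_closure (C := 1) (s := univ)
    (L := LinearMap.toContinuousLinearMap L) lipschitzWith_one_norm (by simp)
    fun v _ => hline v).differentiableAt

end NormDirDeriv

section IsNormVertex

variable {E : Type*} [NormedAddCommGroup E] [NormedSpace ℝ E] {p v w : E}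

/-- `p` is a vertex of the sphere through it: the norm has a two-sided derivative at `p` in no
directions other than those of the line `ℝ ∙ p`. -/
def IsNormVertex (p : E) : Prop :=
  ∀ v, normDirJump p v = 0 → v ∈ ℝ ∙ p

namespace IsNormVertex

theorem smul (hp : IsNormVertex p) {c : ℝ} (hc : 0 < c) : IsNormVertex (c • p) := fun v hv => by
  rw [Submodule.span_singleton_smul_eq hc.ne'.isUnit]
  exact hp v (by rwa [normDirJump_smul_left hc] at hv)

-- Segments directed by a vertex are the only geodesics between their endpoints.
theorem eq_smul_of_norm_le_of_norm_sub_le (hp : IsNormVertex p) (hp1 : ‖p‖ = 1) {c s : ℝ}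
    (hv : ‖v‖ ≤ s) (hcv : ‖c • p - v‖ ≤ c - s) : v = s • p := by
  have hforward : normDirDeriv p v ≤ s := (normDirDeriv_le_norm p v).trans hv
  have hbackward : normDirDeriv p (-v) ≤ -s := by
    have h := (normDirDeriv_le_norm p (c • p - v)).trans hcv
    rw [sub_eq_neg_add, normDirDeriv_add_smul_self, hp1] at h
    linarith
  have hjump : normDirJump p v = 0 :=
    le_antisymm (by rw [normDirJump]; linarith) (normDirJump_nonneg p v)
  obtain ⟨b, rfl⟩ := Submodule.mem_span_singleton.1 (hp v hjump)
  have hb := normDirDeriv_add_smul_self p 0 b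
  have hb' := normDirDeriv_add_smul_self p 0 (-b)
  simp only [zero_add, neg_smul, normDirDeriv_zero_right, hp1] at hb hb'
  rw [show b = s by linarith]

theorem hasDerivAt_normalize {q : ℝ → E} {a d : ℝ} (hp : IsNormVertex (q a)) (h0 : q a ≠ 0)
    (hq : HasDerivAt q v a) (hd : HasDerivAt (fun t => ‖q t‖) d a) :
    HasDerivAt (fun t => NormedSpace.normalize (q t)) 0 a := by
  obtain ⟨c, rfl⟩ := Submodule.mem_span_singleton.1
    (hp v (normDirJump_eq_zero_of_hasDerivAt_norm hq hd))
  have hd' : d = c * ‖q a‖ := by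
    rw [← normDirDeriv_eq_of_hasDerivWithinAt hq.hasDerivWithinAt hd.hasDerivWithinAt]
    simpa using normDirDeriv_add_smul_self (q a) 0 c
  have hn : ‖q a‖ ≠ 0 := norm_ne_zero_iff.2 h0
  have hzero : ‖q a‖⁻¹ • c • q a + (-d / ‖q a‖ ^ 2) • q a = 0 := by
    rw [smul_smul, ← add_smul, hd', smul_eq_zero]
    left
    field_simp
    ring
  exact hzero ▸ (hd.fun_inv hn).fun_smul hq

theorem eq_of_normDirDeriv_eq (hp : IsNormVertex p) {φ : E →ₗ[ℝ] ℝ} (hφ : φ.ker ≤ ℝ ∙ p)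
    (hsign : 0 ≤ φ v * φ w) (hD : normDirDeriv p v = normDirDeriv p w)
    (hJ : normDirJump p v = normDirJump p w) : v = w := by
  suffices ∃ c : ℝ, v = w + c • p by
    obtain ⟨c, rfl⟩ := this
    rw [normDirDeriv_add_smul_self, add_eq_left, mul_eq_zero, norm_eq_zero, ← smul_eq_zero] at hD
    rw [hD, add_zero]
  by_cases hw : w ∈ ℝ ∙ p
  · obtain ⟨b, rfl⟩ := Submodule.mem_span_singleton.1 hw
    have hb : normDirJump p (b • p) = 0 := by
      simpa [normDirJump] using normDirJump_add_smul_self p 0 b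
    obtain ⟨c, rfl⟩ := Submodule.mem_span_singleton.1 (hp v (hJ.trans hb))
    exact ⟨c - b, by module⟩
  · have hφw : φ w ≠ 0 := fun h => hw (hφ h)
    obtain ⟨c, hc⟩ := Submodule.mem_span_singleton.1
      (hφ (x := v - (φ v / φ w) • w) (by simp [hφw]))
    have hv : v = (φ v / φ w) • w + c • p := by rw [hc]; abel
    rw [hv, normDirJump_add_smul_self, normDirJump_smul_right,
      mul_eq_right₀ (fun h => hw (hp w h)), abs_of_nonneg] at hJ
    · exact ⟨c, by rwa [hJ, one_smul] at hv⟩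
    · exact div_nonneg_iff.2 (mul_nonneg_iff.1 hsign)

end IsNormVertex

theorem exists_eq_smul_add_smul (hdim : Module.finrank ℝ E = 2) (hp : p ≠ 0) (hw : w ∉ ℝ ∙ p)
    (v : E) : ∃ a b : ℝ, v = a • w + b • p := by
  have : FiniteDimensional ℝ E := Module.finite_of_finrank_eq_succ hdim
  have hli : LinearIndependent ℝ ![p, w] := (LinearIndependent.pair_iff' hp).2 fun a ha =>
    hw (Submodule.mem_span_singleton.2 ⟨a, ha⟩)
  have hspan := hli.span_eq_top_of_card_eq_finrank' (by simp [hdim])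
  have hv : v ∈ Submodule.span ℝ {w, p} := by simpa using hspan.ge (Submodule.mem_top (x := v))
  obtain ⟨a, b, rfl⟩ := Submodule.mem_span_pair.1 hv
  exact ⟨a, b, rfl⟩

theorem isNormVertex_of_normDirJump_ne_zero (hdim : Module.finrank ℝ E = 2) (hp : p ≠ 0)
    (hw : normDirJump p w ≠ 0) : IsNormVertex p := by
  intro v hv
  by_contra hvp
  obtain ⟨a, b, rfl⟩ := exists_eq_smul_add_smul hdim hp hvp w
  rw [normDirJump_add_smul_self, normDirJump_smul_right, hv, mul_zero] at hw
  exact hw rfl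

theorem isNormVertex_of_not_differentiableAt (hdim : Module.finrank ℝ E = 2) (hp : p ≠ 0)
    (hnd : ¬ DifferentiableAt ℝ (fun x : E => ‖x‖) p) : IsNormVertex p := by
  have : FiniteDimensional ℝ E := Module.finite_of_finrank_eq_succ hdim
  obtain ⟨w, hw⟩ := not_forall.1 (mt differentiableAt_norm_of_normDirJump_eq_zero hnd)
  exact isNormVertex_of_normDirJump_ne_zero hdim hp hw

end IsNormVertex

section LocallyLipschitz

theorem locallyLipschitzOn_comp {α β γ : Type*} [PseudoEMetricSpace α] [PseudoEMetricSpace β]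
    [PseudoEMetricSpace γ] {g : β → γ} {f : α → β} {s : Set α} {t : Set β}
    (hg : LocallyLipschitzOn t g) (hf : LocallyLipschitzOn s f) (hst : MapsTo f s t) :
    LocallyLipschitzOn s (g ∘ f) := by
  intro x hx
  obtain ⟨K, u, hu, hfu⟩ := hf hx
  obtain ⟨K', u', hu', hgu⟩ := hg (hst hx)
  have hpre : f ⁻¹' u' ∈ 𝓝[s] x :=
    (hf.continuousOn x hx).tendsto_nhdsWithin hst hu'
  exact ⟨K' * K, u ∩ f ⁻¹' u', inter_mem hu hpre,
    hgu.comp (hfu.mono inter_subset_left) fun y hy => hy.2⟩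

theorem locallyLipschitzOn_smul_const {α E : Type*} [PseudoEMetricSpace α] [NormedAddCommGroup E]
    [NormedSpace ℝ E] {f : α → ℝ} {s : Set α} (hf : LocallyLipschitzOn s f) (v : E) :
    LocallyLipschitzOn s fun x => f x • v :=
  locallyLipschitzOn_comp (t := univ) (g := fun c : ℝ => c • v)
    (ContinuousLinearMap.toSpanSingleton ℝ v).lipschitz.locallyLipschitz.locallyLipschitzOn hf
    (mapsTo_univ _ _)

section Normalize

variable {E : Type*} [NormedAddCommGroup E] [NormedSpace ℝ E]

theorem norm_normalize_sub_normalize_le {x : E} (hx : x ≠ 0) (y : E) :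
    ‖NormedSpace.normalize x - NormedSpace.normalize y‖ ≤ 2 / ‖x‖ * ‖x - y‖ := by
  have hx' : ‖x‖ ≠ 0 := norm_ne_zero_iff.2 hx
  have hy : ‖NormedSpace.normalize y‖ ≤ 1 := by
    rw [NormedSpace.normalize, norm_smul, norm_inv, norm_norm]
    exact inv_mul_le_one
  have hsplit : NormedSpace.normalize x - NormedSpace.normalize y =
      ‖x‖⁻¹ • ((x - y) + (‖y‖ - ‖x‖) • NormedSpace.normalize y) := by
    rw [NormedSpace.normalize, sub_smul, NormedSpace.norm_smul_normalize, eq_inv_smul_iff₀ hx',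
      smul_sub, smul_inv_smul₀ hx']
    abel
  calc ‖NormedSpace.normalize x - NormedSpace.normalize y‖
      = ‖x‖⁻¹ * ‖(x - y) + (‖y‖ - ‖x‖) • NormedSpace.normalize y‖ := by
        rw [hsplit, norm_smul, norm_inv, norm_norm]
    _ ≤ ‖x‖⁻¹ * (‖x - y‖ + ‖x - y‖ * 1) := by
        grw [norm_add_le, norm_smul, hy, Real.norm_eq_abs, abs_sub_comm, abs_norm_sub_norm_le]
    _ = 2 / ‖x‖ * ‖x - y‖ := by ring

theorem locallyLipschitzOn_normalize : LocallyLipschitzOn {0}ᶜ (NormedSpace.normalize : E → E) := by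
  intro x (hx : x ≠ 0)
  have hr : 0 < ‖x‖ / 2 := half_pos (norm_pos_iff.2 hx)
  have hmem : {y | ‖x‖ / 2 < ‖y‖} ∈ 𝓝 x :=
    (isOpen_lt continuous_const continuous_norm).mem_nhds (half_lt_self (norm_pos_iff.2 hx))
  refine ⟨(2 / (‖x‖ / 2)).toNNReal, _, mem_nhdsWithin_of_mem_nhds hmem,
    LipschitzOnWith.of_dist_le_mul fun y (hy : ‖x‖ / 2 < ‖y‖) w _ => ?_⟩
  rw [Real.coe_toNNReal _ (by positivity), dist_eq_norm, dist_eq_norm]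
  grw [norm_normalize_sub_normalize_le (norm_pos_iff.1 (hr.trans hy)) w, hy]

end Normalize

section RealLine

variable {F : Type*} [NormedAddCommGroup F] {f : ℝ → F} {s : Set ℝ}

theorem absolutelyContinuousOnInterval_of_locallyLipschitzOn (hs : s.OrdConnected)
    (hf : LocallyLipschitzOn s f) {a b : ℝ} (ha : a ∈ s) (hb : b ∈ s) :
    AbsolutelyContinuousOnInterval f a b := by
  obtain ⟨K, hK⟩ := (hf.mono (hs.uIcc_subset ha hb)).exists_lipschitzOnWith_of_compact
    isCompact_uIcc
  exact hK.absolutelyContinuousOnInterval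

variable [NormedSpace ℝ F]

theorem ae_differentiableAt_of_locallyLipschitzOn [FiniteDimensional ℝ F] (hs : s.OrdConnected)
    (hso : IsOpen s) (hf : LocallyLipschitzOn s f) : ∀ᵐ x, x ∈ s → DifferentiableAt ℝ f x := by
  have hbv : LocallyBoundedVariationOn f s := fun a b ha hb =>
    (absolutelyContinuousOnInterval_of_locallyLipschitzOn hs hf ha hb).boundedVariationOn.mono
      (inter_subset_right.trans Icc_subset_uIcc)
  filter_upwards [hbv.ae_differentiableWithinAt_of_mem] with x hx hxs
  exact (hx hxs).differentiableAt (hso.mem_nhds hxs)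

theorem eq_of_ae_hasDerivAt_zero_of_locallyLipschitzOn (hs : s.OrdConnected)
    (hf : LocallyLipschitzOn s f) (hderiv : ∀ᵐ x, x ∈ s → HasDerivAt f 0 x) {a b : ℝ}
    (ha : a ∈ s) (hb : b ∈ s) : f a = f b := by
  have hac := absolutelyContinuousOnInterval_of_locallyLipschitzOn hs hf ha hb
  obtain ⟨C, hC⟩ := hac.const_of_ae_hasDerivAt_zero <|
    hderiv.mono fun x hx hxab => hx (hs.uIcc_subset ha hb hxab)
  rw [hC a left_mem_uIcc, hC b right_mem_uIcc]

end RealLine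

end LocallyLipschitz

section BallExit

variable {E : Type*} [NormedAddCommGroup E] [NormedSpace ℝ E] {x z : E}

/-- The largest `t` for which `x + t • z` lies in the closed unit ball. It is meaningful for `z ≠ 0`
and `‖x‖ ≤ 1`; otherwise the set of such `t` is unbounded or may be empty. -/
noncomputable def ballExit (z x : E) : ℝ :=
  sSup {t : ℝ | ‖x + t • z‖ ≤ 1}

/-- The point where the ray issued from `x` in the direction `z` leaves the closed unit ball. -/
noncomputable def chordEnd (z x : E) : E :=
  x + ballExit z x • z

theorem isGreatest_ballExit (hz : z ≠ 0) (hx : ‖x‖ ≤ 1) :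
    IsGreatest {t : ℝ | ‖x + t • z‖ ≤ 1} (ballExit z x) := by
  have hz' : 0 < ‖z‖ := norm_pos_iff.2 hz
  have hne : {t : ℝ | ‖x + t • z‖ ≤ 1}.Nonempty := ⟨0, by simpa using hx⟩
  have hbdd : BddAbove {t : ℝ | ‖x + t • z‖ ≤ 1} := by
    refine ⟨2 / ‖z‖, fun t (ht : ‖x + t • z‖ ≤ 1) => (le_div_iff₀ hz').2 ?_⟩
    calc t * ‖z‖ ≤ ‖t • z‖ := by rw [norm_smul]; gcongr; exact le_abs_self t
      _ = ‖(x + t • z) - x‖ := by rw [add_sub_cancel_left]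
      _ ≤ 2 := by grw [norm_sub_le, ht, hx]; norm_num
  exact (isClosed_le (by fun_prop) continuous_const).isGreatest_csSup hne hbdd

theorem le_ballExit (hz : z ≠ 0) (hx : ‖x‖ ≤ 1) {t : ℝ} (ht : ‖x + t • z‖ ≤ 1) :
    t ≤ ballExit z x :=
  (isGreatest_ballExit hz hx).2 ht

theorem ballExit_nonneg (hz : z ≠ 0) (hx : ‖x‖ ≤ 1) : 0 ≤ ballExit z x :=
  le_ballExit hz hx (by simpa using hx)

theorem one_lt_norm_chordEnd_add (hz : z ≠ 0) (hx : ‖x‖ ≤ 1) {t : ℝ} (ht : 0 < t) :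
    1 < ‖chordEnd z x + t • z‖ := by
  by_contra! h
  rw [chordEnd, add_assoc, ← add_smul] at h
  linarith [le_ballExit hz hx h]

theorem norm_chordEnd (hz : z ≠ 0) (hx : ‖x‖ ≤ 1) : ‖chordEnd z x‖ = 1 := by
  refine le_antisymm (isGreatest_ballExit hz hx).1 ?_
  have hlim : Tendsto (fun t : ℝ => ‖chordEnd z x + t • z‖) (𝓝[>] 0) (𝓝 ‖chordEnd z x‖) := by
    refine (Continuous.tendsto' ?_ 0 _ (by simp)).mono_left nhdsWithin_le_nhds
    fun_prop
  refine ge_of_tendsto hlim ?_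
  filter_upwards [self_mem_nhdsWithin] with t ht using (one_lt_norm_chordEnd_add hz hx ht).le

theorem ballExit_pos (hz : z ≠ 0) (hx : ‖x‖ < 1) : 0 < ballExit z x := by
  refine (ballExit_nonneg hz hx.le).lt_of_ne fun h => hx.ne ?_
  simpa [chordEnd, ← h] using norm_chordEnd hz hx.le

theorem concaveOn_ballExit (hz : z ≠ 0) : ConcaveOn ℝ (closedBall 0 1) (ballExit z) := by
  refine ⟨convex_closedBall 0 1, fun x hx y hy a b ha hb hab => ?_⟩
  have hxy := convex_closedBall (0 : E) 1 hx hy ha hb hab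
  rw [mem_closedBall_zero_iff] at hx hy hxy
  refine le_ballExit hz hxy ?_
  have hcomb : a • x + b • y + (a • ballExit z x + b • ballExit z y) • z =
      a • chordEnd z x + b • chordEnd z y := by
    simp only [chordEnd, smul_eq_mul]
    module
  rw [hcomb, ← mem_closedBall_zero_iff]
  exact convex_closedBall 0 1 (by simp [norm_chordEnd hz hx]) (by simp [norm_chordEnd hz hy])
    ha hb hab

theorem locallyLipschitzOn_ballExit [FiniteDimensional ℝ E] (hz : z ≠ 0) :
    LocallyLipschitzOn (ball 0 1) (ballExit z) :=
  ((concaveOn_ballExit hz).subset ball_subset_closedBall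
    (convex_ball 0 1)).locallyLipschitzOn isOpen_ball

theorem locallyLipschitzOn_chordEnd [FiniteDimensional ℝ E] (hz : z ≠ 0) :
    LocallyLipschitzOn (ball 0 1) (chordEnd z) :=
  LipschitzWith.id.locallyLipschitz.locallyLipschitzOn.add
    (locallyLipschitzOn_smul_const (locallyLipschitzOn_ballExit hz) z)

theorem add_smul_eq_chordEnd (hz : z ≠ 0) (hx : ‖x‖ < 1) {t : ℝ} (ht : 0 ≤ t)
    (h : ‖x + t • z‖ = 1) : x + t • z = chordEnd z x := by
  rw [chordEnd, (le_ballExit hz hx.le h.le).eq_of_not_lt fun hlt => ?_]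
  have hs := ballExit_pos hz hx
  have hmix : x + t • z =
      (1 - t / ballExit z x) • x + (t / ballExit z x) • chordEnd z x := by
    rw [chordEnd, smul_add, smul_smul, div_mul_cancel₀ t hs.ne']
    module
  have hlt' : t / ballExit z x < 1 := (div_lt_one hs).2 hlt
  refine h.not_lt ?_
  calc ‖x + t • z‖ ≤ (1 - t / ballExit z x) * ‖x‖ + t / ballExit z x * 1 := by
        rw [hmix]
        grw [norm_add_le]
        rw [norm_smul, norm_smul, norm_chordEnd hz hx.le, Real.norm_of_nonneg (by linarith),
          Real.norm_of_nonneg (by positivity)]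
    _ < 1 := by nlinarith

theorem add_smul_eq_chordEnd_or (hz : z ≠ 0) (hx : ‖x‖ < 1) {t : ℝ} (h : ‖x + t • z‖ = 1) :
    x + t • z = chordEnd z x ∨ x + t • z = chordEnd (-z) x := by
  rcases le_total 0 t with ht | ht
  · exact .inl (add_smul_eq_chordEnd hz hx ht h)
  · rw [← neg_smul_neg] at h ⊢
    exact .inr (add_smul_eq_chordEnd (neg_ne_zero.2 hz) hx (neg_nonneg.2 ht) h)

theorem eq_chordEnd_midpoint {p q : E} (hz : z ≠ 0) (hp : ‖p‖ = 1) (hmid : ‖midpoint ℝ p q‖ < 1)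
    {c : ℝ} (hc : 0 ≤ c) (hpq : p - q = c • z) : p = chordEnd z (midpoint ℝ p q) := by
  have hline : p = midpoint ℝ p q + (c / 2) • z := by
    rw [div_eq_inv_mul, mul_smul, ← hpq, ← invOf_eq_inv, ← left_sub_midpoint, add_sub_cancel]
  nth_rw 1 [hline]
  exact add_smul_eq_chordEnd hz hmid (by positivity) (hline ▸ hp)

theorem eq_or_eq_of_sub_mem_span {p q : E} (hz : z ≠ 0) (hx : ‖x‖ = 1) (hp : ‖p‖ = 1)
    (hq : ‖q‖ = 1) (hmid : ‖midpoint ℝ p q‖ < 1) {c : ℝ} (hc : 0 ≤ c) (hpq : p - q = c • z)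
    (hxp : x - p ∈ ℝ ∙ z) : x = p ∨ x = q := by
  have hpm : p - midpoint ℝ p q ∈ ℝ ∙ z := by
    rw [left_sub_midpoint, hpq]
    exact Submodule.smul_mem _ _ (Submodule.smul_mem _ _ (Submodule.mem_span_singleton_self z))
  have hxm := add_mem hxp hpm
  rw [sub_add_sub_cancel] at hxm
  obtain ⟨t, ht⟩ := Submodule.mem_span_singleton.1 hxm
  rw [eq_sub_iff_add_eq'] at ht
  have hqend : q = chordEnd (-z) (midpoint ℝ p q) := by
    have h := eq_chordEnd_midpoint (neg_ne_zero.2 hz) hq (midpoint_comm (R := ℝ) p q ▸ hmid) hc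
      (by rw [← neg_sub, hpq, smul_neg])
    rwa [midpoint_comm] at h
  have hpend := eq_chordEnd_midpoint hz hp hmid hc hpq
  have hcases := add_smul_eq_chordEnd_or hz hmid (ht ▸ hx)
  rwa [ht, ← hpend, ← hqend] at hcases

end BallExit

section NormingFrame

variable {E : Type*} [NormedAddCommGroup E] [NormedSpace ℝ E] {x z w : E} {a : ℝ}

/-- A unit vector `e` together with a functional `φ` of norm one that vanishes at `z` and attains
its norm at `e`. The functional labels the lines directed by `z`; those meeting the open unit ball
are the lines through `a • e` with `a ∈ (-1, 1)`. -/
structure NormingFrame (z : E) where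
  e : E
  φ : E →ₗ[ℝ] ℝ
  norm_e : ‖e‖ = 1
  φ_e : φ e = 1
  φ_self : φ z = 0
  abs_φ_le : ∀ x, |φ x| ≤ ‖x‖

theorem nonempty_normingFrame [FiniteDimensional ℝ E] (hz : (ℝ ∙ z) < ⊤) :
    Nonempty (NormingFrame z) := by
  obtain ⟨f, hf, hker⟩ := Submodule.exists_le_ker_of_lt_top _ hz
  have : Nontrivial E := by
    by_contra h
    rw [not_nontrivial_iff_subsingleton] at h
    exact hf (Subsingleton.elim _ _)
  obtain ⟨e, he, hmax⟩ := (isCompact_sphere (0 : E) 1).exists_isMaxOn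
    (NormedSpace.sphere_nonempty.2 zero_le_one)
    (f.continuous_of_finiteDimensional.abs.continuousOn)
  have hbound : ∀ x, |f x| ≤ |f e| * ‖x‖ := fun x => by
    rcases eq_or_ne x 0 with rfl | hx
    · simp
    have h : |f (NormedSpace.normalize x)| ≤ |f e| := hmax (by simp [NormedSpace.norm_normalize hx])
    rwa [NormedSpace.normalize, map_smul, smul_eq_mul, abs_mul, abs_inv, abs_norm,
      inv_mul_le_iff₀' (norm_pos_iff.2 hx)] at h
  have hfe : f e ≠ 0 := fun h => hf <| LinearMap.ext fun x => by simpa [h] using hbound x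
  refine ⟨⟨e, (f e)⁻¹ • f, by simpa using he, by simp [hfe], ?_, fun x => ?_⟩⟩
  · simp [LinearMap.mem_ker.1 (hker (Submodule.mem_span_singleton_self z))]
  · simpa [abs_mul, abs_inv, inv_mul_le_iff₀ (abs_pos.2 hfe)] using hbound x

theorem nonempty_normingFrame_of_finrank_eq_two (hdim : Module.finrank ℝ E = 2) (z : E) :
    Nonempty (NormingFrame z) := by
  have : FiniteDimensional ℝ E := Module.finite_of_finrank_eq_succ hdim
  refine nonempty_normingFrame (lt_top_iff_ne_top.2 fun h => ?_)
  have hle := finrank_le_one z fun x =>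
    Submodule.mem_span_singleton.1 (h.ge (Submodule.mem_top (x := x)))
  omega

namespace NormingFrame

theorem e_notMem_span (F : NormingFrame z) : F.e ∉ ℝ ∙ z := fun h => by
  obtain ⟨c, hc⟩ := Submodule.mem_span_singleton.1 h
  simpa [← hc, F.φ_self] using F.φ_e

theorem eq_smul_add_smul (F : NormingFrame z) (hdim : Module.finrank ℝ E = 2) (hz : z ≠ 0) (x : E) :
    ∃ t : ℝ, x = F.φ x • F.e + t • z := by
  obtain ⟨a, t, h⟩ := exists_eq_smul_add_smul hdim hz F.e_notMem_span x
  have ha : F.φ x = a := by simp [h, F.φ_e, F.φ_self]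
  exact ⟨t, by rw [ha, ← h]⟩

theorem ker_φ_le_span (F : NormingFrame z) (hdim : Module.finrank ℝ E = 2) (hz : z ≠ 0) :
    F.φ.ker ≤ ℝ ∙ z := fun x hx => by
  obtain ⟨t, ht⟩ := F.eq_smul_add_smul hdim hz x
  rw [LinearMap.mem_ker.1 hx, zero_smul, zero_add] at ht
  exact Submodule.mem_span_singleton.2 ⟨t, ht.symm⟩

theorem norm_smul_e_lt_one (F : NormingFrame z) (ha : a ∈ Ioo (-1 : ℝ) 1) : ‖a • F.e‖ < 1 := by
  rw [norm_smul, F.norm_e, mul_one]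
  exact abs_lt.2 ha

/-- The distance, measured in multiples of `w`, from `a • e` to the point where the ray in the
direction `w` leaves the unit ball. -/
noncomputable def height (F : NormingFrame z) (w : E) (a : ℝ) : ℝ :=
  ballExit w (a • F.e)

/-- The arc of the unit sphere, parametrized by `φ`, along which the lines directed by `w` leave the
unit ball. -/
noncomputable def arc (F : NormingFrame z) (w : E) (a : ℝ) : E :=
  chordEnd w (a • F.e)

theorem hasDerivAt_arc (F : NormingFrame z) {h' : ℝ} (hh : HasDerivAt (F.height w) h' a) :
    HasDerivAt (F.arc w) (F.e + h' • w) a := by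
  have h := ((hasDerivAt_id a).smul_const F.e).fun_add (hh.smul_const w)
  rwa [one_smul] at h

theorem norm_arc (F : NormingFrame z) (hw : w ≠ 0) (ha : a ∈ Ioo (-1 : ℝ) 1) : ‖F.arc w a‖ = 1 :=
  norm_chordEnd hw (F.norm_smul_e_lt_one ha).le

theorem φ_arc (F : NormingFrame z) (hw : F.φ w = 0) (a : ℝ) : F.φ (F.arc w a) = a := by
  simp [arc, chordEnd, F.φ_e, hw]

theorem eq_arc_or (F : NormingFrame z) (hdim : Module.finrank ℝ E = 2) (hz : z ≠ 0) (hx : ‖x‖ = 1)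
    (hφ : |F.φ x| < 1) : x = F.arc z (F.φ x) ∨ x = F.arc (-z) (F.φ x) := by
  obtain ⟨t, ht⟩ := F.eq_smul_add_smul hdim hz x
  have h := add_smul_eq_chordEnd_or (t := t) hz (F.norm_smul_e_lt_one (abs_lt.1 hφ)) (ht ▸ hx)
  rwa [← ht] at h

/-- The length, measured in multiples of `z`, of the chord of the unit ball through `a • e` in the
direction `z`. -/
noncomputable def width (F : NormingFrame z) (a : ℝ) : ℝ :=
  F.height z a + F.height (-z) a

theorem width_pos (F : NormingFrame z) (hz : z ≠ 0) (ha : a ∈ Ioo (-1 : ℝ) 1) : 0 < F.width a :=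
  add_pos (ballExit_pos hz (F.norm_smul_e_lt_one ha))
    (ballExit_pos (neg_ne_zero.2 hz) (F.norm_smul_e_lt_one ha))

theorem arc_sub_arc_neg (F : NormingFrame z) (a : ℝ) :
    F.arc z a - F.arc (-z) a = F.width a • z := by
  simp only [arc, chordEnd, width, height]
  module

theorem norm_arc_sub_half_width_smul_ne_one (F : NormingFrame z) (hz : z ≠ 0)
    (ha : a ∈ Ioo (-1 : ℝ) 1) : ‖F.arc z a - (F.width a / 2) • z‖ ≠ 1 := by
  have hwidth := F.width_pos hz ha
  have hline : F.arc z a - (F.width a / 2) • z =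
      a • F.e + (F.height z a - F.width a / 2) • z := by
    rw [arc, chordEnd, height]
    module
  rw [hline]
  intro hnorm
  have hcases := add_smul_eq_chordEnd_or hz (F.norm_smul_e_lt_one ha) hnorm
  simp only [chordEnd, smul_neg, ← neg_smul, add_right_inj,
    (smul_left_injective ℝ hz).eq_iff] at hcases
  simp only [width, height] at hcases hwidth
  rcases hcases with h | h <;> linarith

theorem locallyLipschitzOn_smul_e (F : NormingFrame z) :
    LocallyLipschitzOn (Ioo (-1) 1) fun a : ℝ => a • F.e :=
  locallyLipschitzOn_smul_const LipschitzWith.id.locallyLipschitz.locallyLipschitzOn F.e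

theorem locallyLipschitzOn_height [FiniteDimensional ℝ E] (F : NormingFrame z) (hw : w ≠ 0) :
    LocallyLipschitzOn (Ioo (-1) 1) (F.height w) :=
  locallyLipschitzOn_comp (g := ballExit w) (locallyLipschitzOn_ballExit hw)
    F.locallyLipschitzOn_smul_e fun a ha => by simpa using F.norm_smul_e_lt_one ha

theorem locallyLipschitzOn_arc [FiniteDimensional ℝ E] (F : NormingFrame z) (hw : w ≠ 0) :
    LocallyLipschitzOn (Ioo (-1) 1) (F.arc w) :=
  locallyLipschitzOn_comp (locallyLipschitzOn_chordEnd hw) F.locallyLipschitzOn_smul_e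
    fun a ha => by simpa using F.norm_smul_e_lt_one ha

theorem chordEnd_mem_closure (F : NormingFrame z) (hw : w ≠ 0) (hφw : F.φ w = 0) (hx : ‖x‖ ≤ 1) :
    chordEnd w x ∈ closure {y : E | ‖y‖ = 1 ∧ |F.φ y| < 1} := by
  set p := chordEnd w x
  have hp : ‖p‖ = 1 := norm_chordEnd hw hx
  have hcont : ContinuousAt (fun t : ℝ => NormedSpace.normalize (p + t • w)) 0 := by
    refine ContinuousAt.smul (ContinuousAt.inv₀ (by fun_prop) (by simp [hp])) (by fun_prop)
  have hlim : Tendsto (fun t : ℝ => NormedSpace.normalize (p + t • w)) (𝓝[>] 0) (𝓝 p) := by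
    simpa [NormedSpace.normalize_eq_self_of_norm_eq_one hp] using
      hcont.tendsto.mono_left nhdsWithin_le_nhds
  refine mem_closure_of_tendsto hlim ?_
  filter_upwards [self_mem_nhdsWithin] with t ht
  have hout := one_lt_norm_chordEnd_add hw hx ht
  have hpos : 0 < ‖p + t • w‖ := one_pos.trans hout
  refine ⟨NormedSpace.norm_normalize (norm_pos_iff.1 hpos), ?_⟩
  have hφ : |F.φ (p + t • w)| ≤ 1 := by simpa [hφw, hp] using F.abs_φ_le p
  rw [NormedSpace.normalize, map_smul, smul_eq_mul, abs_mul, abs_inv, abs_norm,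
    inv_mul_lt_one₀ hpos]
  exact hφ.trans_lt hout

end NormingFrame

end NormingFrame

section SphereIsometry

/-- The restriction of `τ` to the unit spheres is a surjective isometry. -/
structure IsSphereIsometry {X Y : Type*} [NormedAddCommGroup X] [NormedAddCommGroup Y]
    (τ : X → Y) : Prop where
  norm_map : ∀ x, ‖x‖ = 1 → ‖τ x‖ = 1
  surj : ∀ y, ‖y‖ = 1 → ∃ x, ‖x‖ = 1 ∧ τ x = y
  norm_sub : ∀ x x', ‖x‖ = 1 → ‖x'‖ = 1 → ‖τ x - τ x'‖ = ‖x - x'‖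

variable {X Y : Type*} [NormedAddCommGroup X] [NormedAddCommGroup Y] {τ : X → Y}

theorem IsSphereIsometry.eq_of_map_eq (hτ : IsSphereIsometry τ) {x x' : X} (hx : ‖x‖ = 1)
    (hx' : ‖x'‖ = 1) (h : τ x = τ x') : x = x' := by
  rw [← sub_eq_zero, ← norm_eq_zero, ← hτ.norm_sub x x' hx hx', h, sub_self, norm_zero]

theorem IsSphereIsometry.lipschitzOnWith (hτ : IsSphereIsometry τ) :
    LipschitzOnWith 1 τ (sphere 0 1) :=
  LipschitzOnWith.of_dist_le_mul fun x hx x' hx' => by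
    rw [dist_eq_norm, dist_eq_norm, NNReal.coe_one, one_mul,
      hτ.norm_sub x x' (mem_sphere_zero_iff_norm.1 hx) (mem_sphere_zero_iff_norm.1 hx')]

variable [NormedSpace ℝ X] {w z : X} {a : ℝ}

/-- The difference of the images under `τ` of the endpoints of the chord of the unit ball through
`a • e` in the direction `z`. -/
noncomputable def NormingFrame.chordImage (F : NormingFrame z) (τ : X → Y) (a : ℝ) : Y :=
  τ (F.arc z a) - τ (F.arc (-z) a)

namespace IsSphereIsometry

theorem norm_map_arc_sub_map_arc (hτ : IsSphereIsometry τ) (F : NormingFrame z) (hz : z ≠ 0)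
    {b : ℝ} (ha : a ∈ Ioo (-1 : ℝ) 1) (hb : b ∈ Ioo (-1 : ℝ) 1) :
    ‖τ (F.arc z a) - τ (F.arc (-z) b)‖ = ‖F.arc z a - F.arc (-z) b‖ :=
  hτ.norm_sub _ _ (F.norm_arc hz ha) (F.norm_arc (neg_ne_zero.2 hz) hb)

theorem norm_chordImage (hτ : IsSphereIsometry τ) (F : NormingFrame z) (hz : ‖z‖ = 1)
    (ha : a ∈ Ioo (-1 : ℝ) 1) : ‖F.chordImage τ a‖ = F.width a := by
  have hz0 : z ≠ 0 := ne_zero_of_norm_ne_zero (hz.trans_ne one_ne_zero)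
  rw [NormingFrame.chordImage, hτ.norm_map_arc_sub_map_arc F hz0 ha ha, F.arc_sub_arc_neg,
    norm_smul, hz, mul_one, Real.norm_of_nonneg (F.width_pos hz0 ha).le]

theorem chordImage_ne_zero (hτ : IsSphereIsometry τ) (F : NormingFrame z) (hz : ‖z‖ = 1)
    (ha : a ∈ Ioo (-1 : ℝ) 1) : F.chordImage τ a ≠ 0 := by
  rw [← norm_pos_iff, hτ.norm_chordImage F hz ha]
  exact F.width_pos (ne_zero_of_norm_ne_zero (hz.trans_ne one_ne_zero)) ha

theorem locallyLipschitzOn_comp_arc [FiniteDimensional ℝ X] (hτ : IsSphereIsometry τ)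
    (F : NormingFrame z) (hw : w ≠ 0) : LocallyLipschitzOn (Ioo (-1) 1) fun a => τ (F.arc w a) :=
  locallyLipschitzOn_comp (fun _ _ => ⟨1, _, self_mem_nhdsWithin, hτ.lipschitzOnWith⟩)
    (F.locallyLipschitzOn_arc hw) fun _ ha => mem_sphere_zero_iff_norm.2 (F.norm_arc hw ha)

theorem locallyLipschitzOn_chordImage [FiniteDimensional ℝ X] (hτ : IsSphereIsometry τ)
    (F : NormingFrame z) (hz : z ≠ 0) : LocallyLipschitzOn (Ioo (-1) 1) (F.chordImage τ) :=
  (hτ.locallyLipschitzOn_comp_arc F hz).sub (hτ.locallyLipschitzOn_comp_arc F (neg_ne_zero.2 hz))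

variable [NormedSpace ℝ Y] {h' : ℝ} {v : Y}

theorem normDirDeriv_chordImage (hτ : IsSphereIsometry τ) (F : NormingFrame z) (hz : z ≠ 0)
    (ha : a ∈ Ioo (-1 : ℝ) 1) (hh : HasDerivAt (F.height z) h' a)
    (hv : HasDerivAt (fun t => τ (F.arc z t)) v a) :
    normDirDeriv (F.chordImage τ a) v = normDirDeriv z F.e + h' * ‖z‖ := by
  have h := normDirDeriv_eq_of_norm_eventuallyEq (hv.sub_const (τ (F.arc (-z) a)))
    ((F.hasDerivAt_arc hh).sub_const (F.arc (-z) a)) <|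
    (isOpen_Ioo.eventually_mem ha).mono fun t ht => hτ.norm_map_arc_sub_map_arc F hz ht ha
  rwa [F.arc_sub_arc_neg, normDirDeriv_smul_left (F.width_pos hz ha),
    normDirDeriv_add_smul_self] at h

theorem normDirJump_chordImage (hτ : IsSphereIsometry τ) (F : NormingFrame z) (hz : z ≠ 0)
    (ha : a ∈ Ioo (-1 : ℝ) 1) (hh : HasDerivAt (F.height z) h' a)
    (hv : HasDerivAt (fun t => τ (F.arc z t)) v a) :
    normDirJump (F.chordImage τ a) v = normDirJump z F.e := by
  have h := normDirJump_eq_of_norm_eventuallyEq (hv.sub_const (τ (F.arc (-z) a)))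
    ((F.hasDerivAt_arc hh).sub_const (F.arc (-z) a)) <|
    (isOpen_Ioo.eventually_mem ha).mono fun t ht => hτ.norm_map_arc_sub_map_arc F hz ht ha
  rwa [F.arc_sub_arc_neg, normDirJump_smul_left (F.width_pos hz ha),
    normDirJump_add_smul_self] at h

section ChordDirection

variable [FiniteDimensional ℝ X]

theorem ae_isNormVertex_chordImage (hdimY : Module.finrank ℝ Y = 2) (hτ : IsSphereIsometry τ)
    (F : NormingFrame z) (hz : ‖z‖ = 1) (hvertex : IsNormVertex z) :
    ∀ᵐ a, a ∈ Ioo (-1 : ℝ) 1 → IsNormVertex (F.chordImage τ a) := by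
  have : FiniteDimensional ℝ Y := Module.finite_of_finrank_eq_succ hdimY
  have hz0 : z ≠ 0 := ne_zero_of_norm_ne_zero (hz.trans_ne one_ne_zero)
  filter_upwards [ae_differentiableAt_of_locallyLipschitzOn ordConnected_Ioo isOpen_Ioo
      (F.locallyLipschitzOn_height hz0),
    ae_differentiableAt_of_locallyLipschitzOn ordConnected_Ioo isOpen_Ioo
      (hτ.locallyLipschitzOn_comp_arc F hz0)] with a hheight hτarc ha
  refine isNormVertex_of_normDirJump_ne_zero hdimY (hτ.chordImage_ne_zero F hz ha)
    (w := deriv (fun t => τ (F.arc z t)) a) ?_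
  rw [hτ.normDirJump_chordImage F hz0 ha (hheight ha).hasDerivAt (hτarc ha).hasDerivAt]
  exact fun h => F.e_notMem_span (hvertex _ h)

theorem ae_hasDerivAt_normalize_chordImage (hdimY : Module.finrank ℝ Y = 2)
    (hτ : IsSphereIsometry τ) (F : NormingFrame z) (hz : ‖z‖ = 1) (hvertex : IsNormVertex z) :
    ∀ᵐ a, a ∈ Ioo (-1 : ℝ) 1 →
      HasDerivAt (fun t => NormedSpace.normalize (F.chordImage τ t)) 0 a := by
  have : FiniteDimensional ℝ Y := Module.finite_of_finrank_eq_succ hdimY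
  have hz0 : z ≠ 0 := ne_zero_of_norm_ne_zero (hz.trans_ne one_ne_zero)
  have hchord := hτ.locallyLipschitzOn_chordImage F hz0
  have hnorm : LocallyLipschitzOn (Ioo (-1) 1) fun t => ‖F.chordImage τ t‖ :=
    locallyLipschitzOn_comp (t := univ) lipschitzWith_one_norm.locallyLipschitz.locallyLipschitzOn
      hchord (mapsTo_univ _ _)
  filter_upwards [ae_differentiableAt_of_locallyLipschitzOn ordConnected_Ioo isOpen_Ioo hchord,
    ae_differentiableAt_of_locallyLipschitzOn ordConnected_Ioo isOpen_Ioo hnorm,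
    hτ.ae_isNormVertex_chordImage hdimY F hz hvertex] with a hda hna hva ha
  exact (hva ha).hasDerivAt_normalize (hτ.chordImage_ne_zero F hz ha) (hda ha).hasDerivAt
    (hna ha).hasDerivAt

theorem exists_chordImage_eq_width_smul (hdimY : Module.finrank ℝ Y = 2)
    (hτ : IsSphereIsometry τ) (F : NormingFrame z) (hz : ‖z‖ = 1) (hvertex : IsNormVertex z) :
    ∃ z' : Y, ‖z'‖ = 1 ∧ IsNormVertex z' ∧
      ∀ a ∈ Ioo (-1 : ℝ) 1, F.chordImage τ a = F.width a • z' := by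
  have hfreq : ∃ᵐ b : ℝ, b ∈ Ioo (-1 : ℝ) 1 := frequently_ae_mem_iff.2 (by simp)
  obtain ⟨b, hb, hvb⟩ :=
    (hfreq.and_eventually (hτ.ae_isNormVertex_chordImage hdimY F hz hvertex)).exists
  specialize hvb hb
  have hb0 := hτ.chordImage_ne_zero F hz hb
  have hlip := locallyLipschitzOn_comp locallyLipschitzOn_normalize
    (hτ.locallyLipschitzOn_chordImage F (ne_zero_of_norm_ne_zero (hz.trans_ne one_ne_zero)))
    fun t ht => hτ.chordImage_ne_zero F hz ht
  refine ⟨NormedSpace.normalize (F.chordImage τ b), NormedSpace.norm_normalize hb0,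
    hvb.smul (inv_pos.2 (norm_pos_iff.2 hb0)), fun a ha => ?_⟩
  have hconst := eq_of_ae_hasDerivAt_zero_of_locallyLipschitzOn ordConnected_Ioo hlip
    (hτ.ae_hasDerivAt_normalize_chordImage hdimY F hz hvertex) ha hb
  simp only [Function.comp_apply] at hconst
  rw [← hconst, ← hτ.norm_chordImage F hz ha, NormedSpace.norm_smul_normalize]

end ChordDirection

end IsSphereIsometry

end SphereIsometry

theorem mul_nonneg_of_hasDerivAt_of_injOn_Ioo {f : ℝ → ℝ} {a b c d x y : ℝ}
    (hf : ContinuousOn f (Ioo a b)) (hinj : InjOn f (Ioo a b)) (hx : x ∈ Ioo a b)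
    (hy : y ∈ Ioo a b) (hc : HasDerivAt f c x) (hd : HasDerivAt f d y) : 0 ≤ c * d := by
  have hacc : ∀ t ∈ Ioo a b, AccPt t (𝓟 (Ioo a b)) := fun t ht =>
    (uniqueDiffWithinAt_Ioo ht).accPt
  rcases hf.strictMonoOn_of_injOn_Ioo (hx.1.trans hx.2) hinj with h | h
  · exact mul_nonneg (hc.hasDerivWithinAt.nonneg_of_monotoneOn (hacc x hx) h.monotoneOn)
      (hd.hasDerivWithinAt.nonneg_of_monotoneOn (hacc y hy) h.monotoneOn)
  · exact mul_nonneg_of_nonpos_of_nonpos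
      (hc.hasDerivWithinAt.nonpos_of_antitoneOn (hacc x hx) h.antitoneOn)
      (hd.hasDerivWithinAt.nonpos_of_antitoneOn (hacc y hy) h.antitoneOn)

section FlatImage

variable {X Y : Type*} [NormedAddCommGroup X] [NormedAddCommGroup Y] [NormedSpace ℝ X]
  [NormedSpace ℝ Y] {τ : X → Y} {z : X} {z' : Y} {φ' : Y →ₗ[ℝ] ℝ} {a : ℝ}

namespace IsSphereIsometry

theorem norm_midpoint_map_arc_lt_one (hτ : IsSphereIsometry τ) (F : NormingFrame z) (hz : ‖z‖ = 1)
    (hvertex : IsNormVertex z) (ha : a ∈ Ioo (-1 : ℝ) 1) :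
    ‖midpoint ℝ (τ (F.arc z a)) (τ (F.arc (-z) a))‖ < 1 := by
  have hz0 : z ≠ 0 := ne_zero_of_norm_ne_zero (hz.trans_ne one_ne_zero)
  have hp := F.norm_arc hz0 ha
  have hq := F.norm_arc (neg_ne_zero.2 hz0) ha
  have hle := (convex_closedBall (0 : Y) 1).midpoint_mem
    (mem_closedBall_zero_iff.2 (hτ.norm_map _ hp).le)
    (mem_closedBall_zero_iff.2 (hτ.norm_map _ hq).le)
  refine (mem_closedBall_zero_iff.1 hle).lt_of_ne fun hnorm => ?_
  obtain ⟨u, hu, hmid⟩ := hτ.surj _ hnorm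
  have hpu : ‖F.arc z a - u‖ = F.width a / 2 := by
    rw [← hτ.norm_sub _ _ hp hu, hmid, ← dist_eq_norm, dist_left_midpoint, dist_eq_norm,
      ← NormingFrame.chordImage, hτ.norm_chordImage F hz ha, Real.norm_ofNat, inv_mul_eq_div]
  have huq : ‖u - F.arc (-z) a‖ = F.width a / 2 := by
    rw [← hτ.norm_sub _ _ hu hq, hmid, ← dist_eq_norm, dist_midpoint_right, dist_eq_norm,
      ← NormingFrame.chordImage, hτ.norm_chordImage F hz ha, Real.norm_ofNat, inv_mul_eq_div]
  -- The chord is the only geodesic between its endpoints, so `u` is its midpoint.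
  have hu' := hvertex.eq_smul_of_norm_le_of_norm_sub_le hz (c := F.width a) hpu.le <| by
    rw [← F.arc_sub_arc_neg, sub_sub_sub_cancel_left, huq]
    linarith
  rw [sub_eq_iff_eq_add, ← sub_eq_iff_eq_add'] at hu'
  exact F.norm_arc_sub_half_width_smul_ne_one hz0 ha (hu' ▸ hu)

theorem injOn_comp_map_arc (hτ : IsSphereIsometry τ) (F : NormingFrame z) (hz : ‖z‖ = 1)
    (hvertex : IsNormVertex z) (hz' : z' ≠ 0)
    (hchord : ∀ a ∈ Ioo (-1 : ℝ) 1, F.chordImage τ a = F.width a • z')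
    (hφ' : φ'.ker ≤ ℝ ∙ z') : InjOn (fun a => φ' (τ (F.arc z a))) (Ioo (-1) 1) := by
  intro a ha b hb hab
  have hz0 : z ≠ 0 := ne_zero_of_norm_ne_zero (hz.trans_ne one_ne_zero)
  have hp := F.norm_arc hz0 ha
  have hq := F.norm_arc (neg_ne_zero.2 hz0) ha
  have hb' := F.norm_arc hz0 hb
  rw [← F.φ_arc F.φ_self b]
  rcases eq_or_eq_of_sub_mem_span hz' (hτ.norm_map _ hb') (hτ.norm_map _ hp) (hτ.norm_map _ hq)
    (hτ.norm_midpoint_map_arc_lt_one F hz hvertex ha) (F.width_pos hz0 ha).le (hchord a ha)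
    (hφ' (LinearMap.sub_mem_ker_iff.2 hab.symm)) with h | h
  · rw [hτ.eq_of_map_eq hb' hp h, F.φ_arc F.φ_self]
  · rw [hτ.eq_of_map_eq hb' hq h, F.φ_arc (by rw [map_neg, F.φ_self, neg_zero])]

end IsSphereIsometry

/-- The image under `τ` of the arc of `F` in the direction `z`, slid along `z'` by the height of the
arc. If `τ` is affine with linear part taking `z` to `z'`, it runs along a straight line at constant
speed. -/
noncomputable def NormingFrame.flatImage (F : NormingFrame z) (τ : X → Y) (z' : Y) (a : ℝ) : Y :=
  τ (F.arc z a) - F.height z a • z'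

namespace IsSphereIsometry

section Derivatives

variable {h' : ℝ} {v : Y}

theorem hasDerivAt_comp_arc_of_flatImage (F : NormingFrame z) (hh : HasDerivAt (F.height z) h' a)
    (hv : HasDerivAt (F.flatImage τ z') v a) :
    HasDerivAt (fun t => τ (F.arc z t)) (v + h' • z') a := by
  have h := hv.fun_add (hh.smul_const z')
  simpa only [NormingFrame.flatImage, sub_add_cancel] using h

theorem normDirDeriv_flatImage (hτ : IsSphereIsometry τ) (F : NormingFrame z) (hz : ‖z‖ = 1)
    (hz' : ‖z'‖ = 1) (ha : a ∈ Ioo (-1 : ℝ) 1) (hchord : F.chordImage τ a = F.width a • z')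
    (hh : HasDerivAt (F.height z) h' a) (hv : HasDerivAt (F.flatImage τ z') v a) :
    normDirDeriv z' v = normDirDeriv z F.e := by
  have hz0 : z ≠ 0 := ne_zero_of_norm_ne_zero (hz.trans_ne one_ne_zero)
  have h := hτ.normDirDeriv_chordImage F hz0 ha hh (hasDerivAt_comp_arc_of_flatImage F hh hv)
  rwa [hchord, normDirDeriv_smul_left (F.width_pos hz0 ha), normDirDeriv_add_smul_self, hz, hz',
    add_left_inj] at h

theorem normDirJump_flatImage (hτ : IsSphereIsometry τ) (F : NormingFrame z) (hz : z ≠ 0)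
    (ha : a ∈ Ioo (-1 : ℝ) 1) (hchord : F.chordImage τ a = F.width a • z')
    (hh : HasDerivAt (F.height z) h' a) (hv : HasDerivAt (F.flatImage τ z') v a) :
    normDirJump z' v = normDirJump z F.e := by
  have h := hτ.normDirJump_chordImage F hz ha hh (hasDerivAt_comp_arc_of_flatImage F hh hv)
  rwa [hchord, normDirJump_smul_left (F.width_pos hz ha), normDirJump_add_smul_self] at h

end Derivatives

variable [FiniteDimensional ℝ X]

theorem locallyLipschitzOn_flatImage (hτ : IsSphereIsometry τ) (F : NormingFrame z) (hz : z ≠ 0)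
    (z' : Y) : LocallyLipschitzOn (Ioo (-1) 1) (F.flatImage τ z') :=
  (hτ.locallyLipschitzOn_comp_arc F hz).sub
    (locallyLipschitzOn_smul_const (F.locallyLipschitzOn_height hz) z')

theorem mul_nonneg_of_hasDerivAt_flatImage [FiniteDimensional ℝ Y] (hτ : IsSphereIsometry τ)
    (F : NormingFrame z) (hz : ‖z‖ = 1) (hvertex : IsNormVertex z) (hz' : z' ≠ 0)
    (hchord : ∀ a ∈ Ioo (-1 : ℝ) 1, F.chordImage τ a = F.width a • z')
    (F' : NormingFrame z') (hφ' : F'.φ.ker ≤ ℝ ∙ z') {b : ℝ} (ha : a ∈ Ioo (-1 : ℝ) 1)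
    (hb : b ∈ Ioo (-1 : ℝ) 1) {v w : Y} (hv : HasDerivAt (F.flatImage τ z') v a)
    (hw : HasDerivAt (F.flatImage τ z') w b) : 0 ≤ F'.φ v * F'.φ w := by
  have hz0 : z ≠ 0 := ne_zero_of_norm_ne_zero (hz.trans_ne one_ne_zero)
  have hφ_flat : F'.φ ∘ F.flatImage τ z' = fun t => F'.φ (τ (F.arc z t)) := by
    ext t
    simp [NormingFrame.flatImage, F'.φ_self]
  let L := LinearMap.toContinuousLinearMap F'.φ
  have hcont : ContinuousOn (F'.φ ∘ F.flatImage τ z') (Ioo (-1) 1) :=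
    L.continuous.comp_continuousOn (hτ.locallyLipschitzOn_flatImage F hz0 z').continuousOn
  have hinj : InjOn (F'.φ ∘ F.flatImage τ z') (Ioo (-1) 1) :=
    hφ_flat ▸ hτ.injOn_comp_map_arc F hz hvertex hz' hchord hφ'
  exact mul_nonneg_of_hasDerivAt_of_injOn_Ioo hcont hinj ha hb
    (L.hasFDerivAt.comp_hasDerivAt a hv) (L.hasFDerivAt.comp_hasDerivAt b hw)

theorem exists_ae_hasDerivAt_flatImage (hdimY : Module.finrank ℝ Y = 2) (hτ : IsSphereIsometry τ)
    (F : NormingFrame z) (hz : ‖z‖ = 1) (hvertex : IsNormVertex z) (hz' : ‖z'‖ = 1)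
    (hvertex' : IsNormVertex z')
    (hchord : ∀ a ∈ Ioo (-1 : ℝ) 1, F.chordImage τ a = F.width a • z') :
    ∃ w, ∀ᵐ a, a ∈ Ioo (-1 : ℝ) 1 → HasDerivAt (F.flatImage τ z') w a := by
  have : FiniteDimensional ℝ Y := Module.finite_of_finrank_eq_succ hdimY
  have hz0 : z ≠ 0 := ne_zero_of_norm_ne_zero (hz.trans_ne one_ne_zero)
  have hz0' : z' ≠ 0 := ne_zero_of_norm_ne_zero (hz'.trans_ne one_ne_zero)
  obtain ⟨F'⟩ := nonempty_normingFrame_of_finrank_eq_two hdimY z'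
  have hφ' := F'.ker_φ_le_span hdimY hz0'
  have hheight := ae_differentiableAt_of_locallyLipschitzOn ordConnected_Ioo isOpen_Ioo
    (F.locallyLipschitzOn_height hz0)
  have hflat := ae_differentiableAt_of_locallyLipschitzOn ordConnected_Ioo isOpen_Ioo
    (hτ.locallyLipschitzOn_flatImage F hz0 z')
  have hfreq : ∃ᵐ b : ℝ, b ∈ Ioo (-1 : ℝ) 1 := frequently_ae_mem_iff.2 (by simp)
  obtain ⟨b, hb, hheight_b, hflat_b⟩ := (hfreq.and_eventually (hheight.and hflat)).exists
  replace hheight_b := (hheight_b hb).hasDerivAt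
  replace hflat_b := (hflat_b hb).hasDerivAt
  refine ⟨deriv (F.flatImage τ z') b, ?_⟩
  filter_upwards [hheight, hflat] with a hheight_a hflat_a ha
  replace hheight_a := (hheight_a ha).hasDerivAt
  replace hflat_a := (hflat_a ha).hasDerivAt
  convert hflat_a using 1
  refine hvertex'.eq_of_normDirDeriv_eq hφ'
    (hτ.mul_nonneg_of_hasDerivAt_flatImage F hz hvertex hz0' hchord F' hφ' hb ha hflat_b hflat_a)
    ?_ ?_
  · rw [hτ.normDirDeriv_flatImage F hz hz' hb (hchord b hb) hheight_b hflat_b,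
      hτ.normDirDeriv_flatImage F hz hz' ha (hchord a ha) hheight_a hflat_a]
  · rw [hτ.normDirJump_flatImage F hz0 hb (hchord b hb) hheight_b hflat_b,
      hτ.normDirJump_flatImage F hz0 ha (hchord a ha) hheight_a hflat_a]

theorem exists_flatImage_eq (hdimY : Module.finrank ℝ Y = 2) (hτ : IsSphereIsometry τ)
    (F : NormingFrame z) (hz : ‖z‖ = 1) (hvertex : IsNormVertex z) (hz' : ‖z'‖ = 1)
    (hvertex' : IsNormVertex z')
    (hchord : ∀ a ∈ Ioo (-1 : ℝ) 1, F.chordImage τ a = F.width a • z') :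
    ∃ w k, ∀ a ∈ Ioo (-1 : ℝ) 1, F.flatImage τ z' a = a • w + k := by
  obtain ⟨w, hw⟩ := hτ.exists_ae_hasDerivAt_flatImage hdimY F hz hvertex hz' hvertex' hchord
  have hline : ∀ t, HasDerivAt (fun a : ℝ => a • w) w t := fun t => by
    simpa using hasDerivAt_add_smul 0 w t
  have hlip : LocallyLipschitzOn (Ioo (-1) 1) (F.flatImage τ z' - fun a : ℝ => a • w) :=
    (hτ.locallyLipschitzOn_flatImage F (ne_zero_of_norm_ne_zero (hz.trans_ne one_ne_zero)) z').sub
      (locallyLipschitzOn_smul_const LipschitzWith.id.locallyLipschitz.locallyLipschitzOn w)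
  refine ⟨w, F.flatImage τ z' 0, fun a ha => ?_⟩
  have hconst := eq_of_ae_hasDerivAt_zero_of_locallyLipschitzOn ordConnected_Ioo hlip
    (hw.mono fun t ht hmem => by simpa using (ht hmem).sub (hline t)) ha (b := 0) (by simp)
  simp only [Pi.sub_apply, zero_smul, sub_zero] at hconst
  rw [← hconst, add_sub_cancel]

end IsSphereIsometry

end FlatImage

section Extension

variable {X Y : Type*} [NormedAddCommGroup X] [NormedAddCommGroup Y] [NormedSpace ℝ X]
  [NormedSpace ℝ Y] {τ : X → Y} {z : X} {z' : Y} {A : X →ₗ[ℝ] Y} {k : Y}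

theorem NormingFrame.exists_linearMap_apply_eq (hdimX : Module.finrank ℝ X = 2)
    (F : NormingFrame z) (hz : z ≠ 0) (w z' : Y) : ∃ A : X →ₗ[ℝ] Y, A F.e = w ∧ A z = z' := by
  have : FiniteDimensional ℝ X := Module.finite_of_finrank_eq_succ hdimX
  have hli : LinearIndependent ℝ ![z, F.e] := (LinearIndependent.pair_iff' hz).2 fun a ha =>
    F.e_notMem_span (Submodule.mem_span_singleton.2 ⟨a, ha⟩)
  let b := basisOfLinearIndependentOfCardEqFinrank hli (by simp [hdimX])
  refine ⟨b.constr ℝ ![z', w], ?_, ?_⟩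
  · simpa [b] using b.constr_basis ℝ ![z', w] 1
  · simpa [b] using b.constr_basis ℝ ![z', w] 0

namespace IsSphereIsometry

theorem exists_eq_add_of_abs_φ_lt (hdimX : Module.finrank ℝ X = 2)
    (hdimY : Module.finrank ℝ Y = 2) (hτ : IsSphereIsometry τ) (F : NormingFrame z) (hz : ‖z‖ = 1)
    (hvertex : IsNormVertex z) (hz' : ‖z'‖ = 1) (hvertex' : IsNormVertex z')
    (hchord : ∀ a ∈ Ioo (-1 : ℝ) 1, F.chordImage τ a = F.width a • z') :
    ∃ (A : X →ₗ[ℝ] Y) (k : Y), A z = z' ∧ ∀ x, ‖x‖ = 1 → |F.φ x| < 1 → τ x = A x + k := by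
  have : FiniteDimensional ℝ X := Module.finite_of_finrank_eq_succ hdimX
  have hz0 : z ≠ 0 := ne_zero_of_norm_ne_zero (hz.trans_ne one_ne_zero)
  obtain ⟨w, k, hflat⟩ := hτ.exists_flatImage_eq hdimY F hz hvertex hz' hvertex' hchord
  obtain ⟨A, hAe, hAz⟩ := F.exists_linearMap_apply_eq hdimX hz0 w z'
  have harc : ∀ a ∈ Ioo (-1 : ℝ) 1, τ (F.arc z a) = A (F.arc z a) + k := fun a ha => by
    rw [sub_eq_iff_eq_add.1 (hflat a ha), NormingFrame.arc, chordEnd, map_add, map_smul, map_smul,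
      hAe, hAz, NormingFrame.height]
    abel
  have harc_neg : ∀ a ∈ Ioo (-1 : ℝ) 1, τ (F.arc (-z) a) = A (F.arc (-z) a) + k := fun a ha => by
    have hX := sub_eq_iff_eq_add'.1 (F.arc_sub_arc_neg a)
    have hY := sub_eq_iff_eq_add'.1 (hchord a ha)
    rw [harc a ha, hX, map_add, map_smul, hAz, add_right_comm, add_left_inj] at hY
    exact hY.symm
  refine ⟨A, k, hAz, fun x hx hφ => ?_⟩
  rcases F.eq_arc_or hdimX hz0 hx hφ with h | h <;> rw [h]
  · exact harc _ (abs_lt.1 hφ)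
  · exact harc_neg _ (abs_lt.1 hφ)

theorem map_chordEnd_eq_add [FiniteDimensional ℝ X] (hτ : IsSphereIsometry τ)
    (F : NormingFrame z) (h : ∀ x, ‖x‖ = 1 → |F.φ x| < 1 → τ x = A x + k) {w x : X} (hw : w ≠ 0)
    (hφw : F.φ w = 0) (hx : ‖x‖ ≤ 1) : τ (chordEnd w x) = A (chordEnd w x) + k := by
  have heq : EqOn τ (fun y => A y + k) {y | ‖y‖ = 1 ∧ |F.φ y| < 1} := fun y hy => h y hy.1 hy.2
  have hA : ContinuousOn (fun y => A y + k) (sphere 0 1) :=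
    (A.continuous_of_finiteDimensional.add_const k).continuousOn
  have hclosure := closure_minimal
    (fun y hy => mem_sphere_zero_iff_norm.2 hy.1 : {y | ‖y‖ = 1 ∧ |F.φ y| < 1} ⊆ sphere 0 1)
    isClosed_sphere
  refine (heq.of_subset_closure (hτ.lipschitzOnWith.continuousOn.mono hclosure) (hA.mono hclosure)
    subset_closure subset_rfl) (F.chordEnd_mem_closure hw hφw hx)

-- The chord through `x` directed by `z` may be contained in the sphere. Its endpoints are mapped to
-- points joined by a unique geodesic, so `τ x` is determined by its distances to them.
theorem eq_add_of_eq_add_of_abs_φ_lt [FiniteDimensional ℝ X] (hτ : IsSphereIsometry τ)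
    (F : NormingFrame z) (hz : ‖z‖ = 1) (hz' : ‖z'‖ = 1) (hvertex' : IsNormVertex z')
    (hAz : A z = z') (h : ∀ x, ‖x‖ = 1 → |F.φ x| < 1 → τ x = A x + k) {x : X} (hx : ‖x‖ = 1) :
    τ x = A x + k := by
  have hz0 : z ≠ 0 := ne_zero_of_norm_ne_zero (hz.trans_ne one_ne_zero)
  have hz0' := neg_ne_zero.2 hz0
  have hp := hτ.map_chordEnd_eq_add F h hz0 F.φ_self hx.le
  have hq := hτ.map_chordEnd_eq_add F h hz0' (by rw [map_neg, F.φ_self, neg_zero]) hx.le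
  have hdist_p : ‖τ (chordEnd z x) - τ x‖ = ballExit z x := by
    rw [hτ.norm_sub _ _ (norm_chordEnd hz0 hx.le) hx, chordEnd, add_sub_cancel_left, norm_smul, hz,
      mul_one, Real.norm_of_nonneg (ballExit_nonneg hz0 hx.le)]
  have hdist_q : ‖τ x - τ (chordEnd (-z) x)‖ = ballExit (-z) x := by
    rw [hτ.norm_sub _ _ hx (norm_chordEnd hz0' hx.le), chordEnd, sub_add_cancel_left, norm_neg,
      norm_smul, norm_neg, hz, mul_one, Real.norm_of_nonneg (ballExit_nonneg hz0' hx.le)]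
  have hpq : (ballExit z x + ballExit (-z) x) • z' = τ (chordEnd z x) - τ (chordEnd (-z) x) := by
    rw [hp, hq, chordEnd, chordEnd, map_add, map_add, map_smul, map_smul, map_neg, hAz]
    module
  have hsub := hvertex'.eq_smul_of_norm_le_of_norm_sub_le hz' hdist_p.le
    (c := ballExit z x + ballExit (-z) x) <| by
      rw [hpq, sub_sub_sub_cancel_left, hdist_q, add_sub_cancel_left]
  rw [sub_eq_iff_eq_add, ← sub_eq_iff_eq_add'] at hsub
  rw [← hsub, hp, chordEnd, map_add, map_smul, hAz]
  abel

theorem eq_zero_of_eq_add (hτ : IsSphereIsometry τ) (h : ∀ x, ‖x‖ = 1 → τ x = A x + k) :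
    k = 0 := by
  by_contra hk
  have hn := NormedSpace.norm_normalize hk
  obtain ⟨x, hx, hτx⟩ := hτ.surj (-NormedSpace.normalize k) ((norm_neg _).trans hn)
  have hneg : τ (-x) = (1 + 2 * ‖k‖) • NormedSpace.normalize k := by
    rw [h x hx, ← eq_sub_iff_add_eq] at hτx
    rw [h (-x) ((norm_neg x).trans hx), map_neg, hτx, add_smul, mul_smul,
      NormedSpace.norm_smul_normalize]
    module
  have hnorm := hτ.norm_map (-x) ((norm_neg x).trans hx)
  rw [hneg, norm_smul, hn, mul_one, Real.norm_of_nonneg (by positivity)] at hnorm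
  linarith [norm_pos_iff.2 hk]

theorem exists_linearIsometryEquiv [FiniteDimensional ℝ X] [FiniteDimensional ℝ Y]
    (hdim : Module.finrank ℝ X = Module.finrank ℝ Y) (hτ : IsSphereIsometry τ)
    (h : ∀ x, ‖x‖ = 1 → τ x = A x + k) : ∃ T : X ≃ₗᵢ[ℝ] Y, ∀ x, ‖x‖ = 1 → T x = τ x := by
  obtain rfl := hτ.eq_zero_of_eq_add h
  simp only [add_zero] at h
  have hA : ∀ x, ‖A x‖ = ‖x‖ := fun x => by
    rcases eq_or_ne x 0 with rfl | hx
    · simp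
    have hx1 := NormedSpace.norm_normalize hx
    rw [← NormedSpace.norm_smul_normalize x, map_smul, norm_smul, norm_smul, ← h _ hx1, hx1,
      hτ.norm_map _ hx1]
  exact ⟨LinearIsometry.toLinearIsometryEquiv ⟨A, hA⟩ hdim, fun x hx => (h x hx).symm⟩

end IsSphereIsometry

end Extension

theorem stmt9_general {X Y : Type*} [NormedAddCommGroup X] [NormedSpace ℝ X]
    [NormedAddCommGroup Y] [NormedSpace ℝ Y]
    (hdimX : Module.finrank ℝ X = 2) (hdimY : Module.finrank ℝ Y = 2)
    {z : X} (hz : ‖z‖ = 1) (hnd : ¬ DifferentiableAt ℝ (fun x : X => ‖x‖) z)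
    (τ : X → Y)
    (hmap : ∀ u : X, ‖u‖ = 1 → ‖τ u‖ = 1)
    (hsurj : ∀ w : Y, ‖w‖ = 1 → ∃ u : X, ‖u‖ = 1 ∧ τ u = w)
    (hiso : ∀ u v : X, ‖u‖ = 1 → ‖v‖ = 1 → ‖τ u - τ v‖ = ‖u - v‖) :
    ∃ T : X ≃ₗᵢ[ℝ] Y, ∀ u : X, ‖u‖ = 1 → T u = τ u := by
  have : FiniteDimensional ℝ X := Module.finite_of_finrank_eq_succ hdimX
  have : FiniteDimensional ℝ Y := Module.finite_of_finrank_eq_succ hdimY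
  have hτ : IsSphereIsometry τ := ⟨hmap, hsurj, hiso⟩
  have hvertex := isNormVertex_of_not_differentiableAt hdimX
    (ne_zero_of_norm_ne_zero (hz.trans_ne one_ne_zero)) hnd
  obtain ⟨F⟩ := nonempty_normingFrame_of_finrank_eq_two hdimX z
  obtain ⟨z', hz', hvertex', hchord⟩ := hτ.exists_chordImage_eq_width_smul hdimY F hz hvertex
  obtain ⟨A, k, hAz, hA⟩ :=
    hτ.exists_eq_add_of_abs_φ_lt hdimX hdimY F hz hvertex hz' hvertex' hchord
  exact hτ.exists_linearIsometryEquiv (hdimX.trans hdimY.symm) fun x hx =>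
    hτ.eq_add_of_eq_add_of_abs_φ_lt F hz hz' hvertex' hAz hA hx

/-- Theorem `ElT`, the main Tingley-type theorem. Let `X`, `Y` be
two-dimensional real normed spaces and `τ : S_X → S_Y` a surjective isometry. If the
set of points of the unit sphere of `X` where the norm fails to be differentiable is
finite and has more than three elements, then `τ` is (the restriction of) a surjective
linear isometry. -/
theorem stmt9 {X Y : Type*} [NormedAddCommGroup X] [NormedSpace ℝ X]
    [NormedAddCommGroup Y] [NormedSpace ℝ Y]
    (hdimX : Module.finrank ℝ X = 2) (hdimY : Module.finrank ℝ Y = 2)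
    (hfin : {u : X | ‖u‖ = 1 ∧ ¬ DifferentiableAt ℝ (fun z : X => ‖z‖) u}.Finite)
    (hcard : 3 < {u : X | ‖u‖ = 1 ∧ ¬ DifferentiableAt ℝ (fun z : X => ‖z‖) u}.ncard)
    (τ : X → Y)
    (hmap : ∀ u : X, ‖u‖ = 1 → ‖τ u‖ = 1)
    (hsurj : ∀ w : Y, ‖w‖ = 1 → ∃ u : X, ‖u‖ = 1 ∧ τ u = w)
    (hiso : ∀ u v : X, ‖u‖ = 1 → ‖v‖ = 1 → ‖τ u - τ v‖ = ‖u - v‖) :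
    ∃ T : X ≃ₗᵢ[ℝ] Y, ∀ u : X, ‖u‖ = 1 → T u = τ u := by
  obtain ⟨z, hz, hnd⟩ := Set.nonempty_of_ncard_ne_zero (ne_zero_of_lt hcard)
  exact stmt9_general hdimX hdimY hz hnd τ hmap hsurj hiso
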